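/- arXiv:2104.13678 — 3 statements merged into one kernel-verified Lean document; each statement's English description precedes it below -/
import Mathlib

section
/- The linear map P on Mₙ(F) defined by P(e_ij) = -e_ij for i < j, P(e_ij) = 0 for i > j, and P(e_ii) = Σ_{k≥1, i+k≤n} e_{i+k,i+k}, is a Rota–Baxter operator of weight 1 on Mₙ(F) satisfying P + P* + id = tr(·)·E (i.e., P is 1-skew-symmetric with respect to the trace form). -/
/-- The linear map on `Mₙ(F)` with `P(e_ij) = -e_ij` for `i < j`,
`P(e_ij) = 0` for `i > j`, and `P(e_ii) = Σ_{k ≥ 1, i+k ≤ n} e_{i+k,i+k}`,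
written entrywise. -/
def Pop {F : Type*} [Field F] {n : ℕ}
    (x : Matrix (Fin n) (Fin n) F) : Matrix (Fin n) (Fin n) F :=
  Matrix.of fun i j =>
    if i < j then -x i j
    else if i = j then ∑ l ∈ Finset.univ.filter (fun l : Fin n => l < i), x l l
    else 0

theorem Pop_tele {F : Type*} [Field F] {n : ℕ} (d e : Fin n → F) (k : ℕ) (hk : k ≤ n) :
    ∑ l ∈ Finset.univ.filter (fun l : Fin n => l.val < k),
      (((∑ m ∈ Finset.univ.filter (fun m : Fin n => m < l), d m) + d l) *
        ((∑ m ∈ Finset.univ.filter (fun m : Fin n => m < l), e m) + e l) -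
        (∑ m ∈ Finset.univ.filter (fun m : Fin n => m < l), d m) *
        (∑ m ∈ Finset.univ.filter (fun m : Fin n => m < l), e m)) =
    (∑ l ∈ Finset.univ.filter (fun l : Fin n => l.val < k), d l) *
    (∑ l ∈ Finset.univ.filter (fun l : Fin n => l.val < k), e l) := by
  induction k with
  | zero => simp
  | succ k ih =>
    have h : Finset.univ.filter (fun l : Fin n => l.val < k + 1) =
        insert (⟨k, hk⟩ : Fin n) (Finset.univ.filter (fun l : Fin n => l.val < k)) := by
      ext l
      simp only [Finset.mem_filter, Finset.mem_univ, true_and, Finset.mem_insert, Fin.ext_iff]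
      omega
    have h2 : (⟨k, hk⟩ : Fin n) ∉ Finset.univ.filter (fun l : Fin n => l.val < k) := by simp
    have h3 : Finset.univ.filter (fun m : Fin n => m < (⟨k, hk⟩ : Fin n)) =
        Finset.univ.filter (fun l : Fin n => l.val < k) := by
      ext l
      simp [Fin.lt_def]
    rw [h, Finset.sum_insert h2, Finset.sum_insert h2, Finset.sum_insert h2, ih (by omega), h3]
    ring

theorem Pop_diag {F : Type*} [Field F] {n : ℕ} (x y : Matrix (Fin n) (Fin n) F) (i : Fin n) :
    (Pop x * Pop y) i i = Pop x i i * Pop y i i := by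
  rw [Matrix.mul_apply, Finset.sum_eq_single i]
  · intro k _ hk
    rcases lt_or_gt_of_ne hk with h | h
    · simp [Pop, h.not_gt, h.ne']
    · simp [Pop, h.not_gt, h.ne']
  · simp

theorem Pop_diag2 {F : Type*} [Field F] {n : ℕ} (x y : Matrix (Fin n) (Fin n) F) (i : Fin n) :
    ((Pop x + x) * (Pop y + y)) i i = (Pop x i i + x i i) * (Pop y i i + y i i) := by
  rw [Matrix.mul_apply, Finset.sum_eq_single i]
  · simp
  · intro k _ hk
    rcases lt_or_gt_of_ne hk with h | h
    · simp [Pop, h]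
    · simp [Pop, h]
  · simp

theorem Pop_low {F : Type*} [Field F] {n : ℕ} (x y : Matrix (Fin n) (Fin n) F) (i j : Fin n)
    (hij : j < i) : (Pop x * Pop y) i j = 0 := by
  rw [Matrix.mul_apply]
  refine Finset.sum_eq_zero fun k _ => ?_
  rcases lt_or_ge k i with h | h
  · simp [Pop, h.not_gt, h.ne']
  · have h' := hij.trans_le h
    simp [Pop, h'.not_gt, h'.ne']

theorem Pop_up {F : Type*} [Field F] {n : ℕ} (x y : Matrix (Fin n) (Fin n) F) (i j : Fin n)
    (hij : i < j) : ((Pop x + x) * (Pop y + y)) i j = 0 := by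
  rw [Matrix.mul_apply]
  refine Finset.sum_eq_zero fun k _ => ?_
  rcases lt_or_ge i k with h | h
  · simp [Pop, h]
  · have h' := h.trans_lt hij
    simp [Pop, h']

theorem Pop_W {F : Type*} [Field F] {n : ℕ} (x y : Matrix (Fin n) (Fin n) F) :
    Pop x * y + x * Pop y + x * y = (Pop x + x) * (Pop y + y) - Pop x * Pop y := by
  noncomm_ring

theorem Pop_ii {F : Type*} [Field F] {n : ℕ} (x : Matrix (Fin n) (Fin n) F) (i : Fin n) :
    Pop x i i = ∑ l ∈ Finset.univ.filter (fun l : Fin n => l < i), x l l := by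
  simp [Pop]


/-- `Pop` is a Rota–Baxter operator of weight `1` on `Mₙ(F)` which is
`1`-skew-symmetric with respect to the trace form: `P + P* + id = tr(·)·E`. -/
theorem Pop_is_one_skew_rb {F : Type*} [Field F] {n : ℕ} :
    (∀ x y : Matrix (Fin n) (Fin n) F,
        Pop x * Pop y = Pop (Pop x * y + x * Pop y + x * y)) ∧
    (∃ Ps : Matrix (Fin n) (Fin n) F → Matrix (Fin n) (Fin n) F,
        (∀ x y : Matrix (Fin n) (Fin n) F, (Pop x * y).trace = (x * Ps y).trace) ∧
        (∀ x : Matrix (Fin n) (Fin n) F,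
            Pop x + Ps x + x = x.trace • (1 : Matrix (Fin n) (Fin n) F))) := by
  refine ⟨fun x y => ?_, fun y => y.trace • (1 : Matrix (Fin n) (Fin n) F) - Pop y - y, ?_, ?_⟩
  · rw [Pop_W]
    ext i j
    rcases lt_trichotomy i j with h | h | h
    · have := Pop_up x y i j h
      simp only [Pop, Matrix.of_apply, if_pos h]
      simp only [Pop] at this
      rw [Matrix.sub_apply, this]
      simp
    · subst h
      rw [Pop_diag, Pop_ii (_ - _)]
      simp only [Matrix.sub_apply, Pop_diag, Pop_diag2, Pop_ii]
      exact (Pop_tele (fun i => x i i) (fun i => y i i) i.val i.isLt.le).symm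
    · rw [Pop_low x y i j h]
      simp [Pop, h.not_gt, h.ne']
  · intro x y
    have h : (Pop x * y + x * Pop y + x * y).trace = x.trace * y.trace := by
      rw [Pop_W]
      simp only [Matrix.trace, Matrix.diag_apply, Matrix.sub_apply, Pop_diag, Pop_diag2, Pop_ii]
      have := Pop_tele (fun i => x i i) (fun i => y i i) n le_rfl
      simpa only [Fin.is_lt, Finset.filter_true] using this
    simp only [Matrix.trace_add] at h
    simp only [Matrix.mul_sub, Matrix.trace_sub, Matrix.mul_smul, Matrix.trace_smul, mul_one,
      smul_eq_mul]
    linear_combination h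
  · intro x
    ext i j
    simp only [Matrix.add_apply, Matrix.sub_apply]
    ring
end

section
/- The linear map P₁ on Mₙ(F) defined by P₁(e_ij) = Σ_{k≥1} e_{i+k,j+k} (sum over k with i+k, j+k ≤ n) for i ≥ j, and P₁(e_ij) = -Σ_{k≥0} e_{i-k,j-k} (sum over k with i-k, j-k ≥ 1) for i < j, is a Rota–Baxter operator of weight 1 on Mₙ(F) satisfying P₁ + P₁* + id = tr(·)·E. -/
/-- Extension of a matrix to a function `ℕ → ℕ → F` by zero. -/
def extM {F : Type*} [Zero F] {n : ℕ}
    (x : Matrix (Fin n) (Fin n) F) (i j : ℕ) : F :=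
  if h : i < n ∧ j < n then x ⟨i, h.1⟩ ⟨j, h.2⟩ else 0

/-- The linear map on `Mₙ(F)` with `P₁(e_ij) = Σ_{k ≥ 1} e_{i+k,j+k}` for `i ≥ j`
and `P₁(e_ij) = -Σ_{k ≥ 0} e_{i-k,j-k}` for `i < j` (sums over indices staying in
range), written entrywise. -/
def P1op {F : Type*} [Field F] {n : ℕ}
    (x : Matrix (Fin n) (Fin n) F) : Matrix (Fin n) (Fin n) F :=
  Matrix.of fun a b =>
    if (b : ℕ) ≤ (a : ℕ) then
      ∑ k ∈ Finset.Icc 1 (b : ℕ), extM x ((a : ℕ) - k) ((b : ℕ) - k)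
    else
      -∑ k ∈ Finset.range (n - (b : ℕ)), extM x ((a : ℕ) + k) ((b : ℕ) + k)

lemma extM_val {F : Type*} [Zero F] {n : ℕ} (x : Matrix (Fin n) (Fin n) F) (i j : Fin n) :
    extM x (i : ℕ) (j : ℕ) = x i j := by
  simp [extM]

lemma Icc_sum_eq {F : Type*} [AddCommMonoid F] (f : ℕ → F) (b : ℕ) :
    ∑ k ∈ Finset.Icc 1 b, f k = ∑ k ∈ Finset.range b, f (k + 1) := by
  rw [Finset.sum_bij (fun k _ => k - 1)]
  · intro a ha; simp at *; omega
  · intro a ha b hb h; simp at *; omega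
  · intro c hc
    refine ⟨c + 1, ?_, ?_⟩
    · simp at *; omega
    · simp
  · intro a ha
    simp at ha
    congr 1
    omega

lemma P_zero {F : Type*} [Field F] {m : ℕ} (x : Matrix (Fin (m+1)) (Fin (m+1)) F)
    (a : Fin (m+1)) : P1op x a 0 = 0 := by
  simp [P1op]

lemma P_last {F : Type*} [Field F] {m : ℕ} (x : Matrix (Fin (m+1)) (Fin (m+1)) F)
    (a : Fin m) : P1op x a.castSucc (Fin.last m) = - x a.castSucc (Fin.last m) := by
  have h : ¬ (m ≤ (a : ℕ)) := by omega
  have := extM_val x a.castSucc (Fin.last m)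
  simp at this
  simp [P1op, h, this]

lemma P_step {F : Type*} [Field F] {m : ℕ} (x : Matrix (Fin (m+1)) (Fin (m+1)) F)
    (a b : Fin m) : P1op x a.succ b.succ
      = P1op x a.castSucc b.castSucc + x a.castSucc b.castSucc := by
  have e := extM_val x a.castSucc b.castSucc
  simp only [Fin.val_castSucc] at e
  by_cases h : (b : ℕ) ≤ (a : ℕ)
  · simp only [P1op, Matrix.of_apply, Fin.val_succ, Fin.val_castSucc, add_le_add_iff_right, h,
      if_true, Icc_sum_eq]
    rw [Finset.sum_range_succ', ← e]
    simp [Nat.add_sub_add_right]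
  · simp only [P1op, Matrix.of_apply, Fin.val_succ, Fin.val_castSucc, add_le_add_iff_right, h,
      if_false]
    have h1 : m + 1 - (b : ℕ) = (m + 1 - ((b : ℕ) + 1)) + 1 := by omega
    rw [h1, Finset.sum_range_succ', ← e]
    have : ∀ k, extM x ((a : ℕ) + 1 + k) ((b : ℕ) + 1 + k)
        = extM x ((a : ℕ) + (k + 1)) ((b : ℕ) + (k + 1)) := by
      intro k; congr 1 <;> omega
    simp [this]

lemma P_trace {F : Type*} [Field F] {m : ℕ} (x : Matrix (Fin (m+1)) (Fin (m+1)) F) :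
    P1op x (Fin.last m) (Fin.last m) + x (Fin.last m) (Fin.last m) = x.trace := by
  have h1 := Fin.sum_univ_succ (fun i => P1op x i i)
  rw [Fin.sum_univ_castSucc] at h1
  simp only [P_step, P_zero, Finset.sum_add_distrib] at h1
  rw [Matrix.trace, Fin.sum_univ_castSucc]
  simp only [Matrix.diag_apply]
  linear_combination h1

lemma d_zero {F : Type*} [Field F] {m : ℕ} (d : Matrix (Fin (m+1)) (Fin (m+1)) F)
    (h0 : ∀ a, d a 0 = 0) (hl : ∀ a : Fin m, d a.castSucc (Fin.last m) = 0)
    (hs : ∀ a b : Fin m, d a.succ b.succ = d a.castSucc b.castSucc) : d = 0 := by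
  have lower : ∀ b : Fin (m+1), ∀ a : Fin (m+1), b ≤ a → d a b = 0 := by
    intro b
    induction b using Fin.induction with
    | zero => intro a _; exact h0 a
    | succ b ih =>
      intro a hab
      induction a using Fin.cases with
      | zero => simp [Fin.le_def] at hab
      | succ a =>
        rw [hs]
        apply ih
        simpa using hab
  have upper : ∀ b : Fin (m+1), ∀ a : Fin (m+1), a < b → d a b = 0 := by
    intro b
    induction b using Fin.reverseInduction with
    | last =>
      intro a ha
      induction a using Fin.lastCases with
      | last => simp at ha
      | cast a => exact hl a
    | cast b ih =>
      intro a hab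
      induction a using Fin.lastCases with
      | last => simp [Fin.lt_def] at hab; omega
      | cast a =>
        rw [← hs]
        apply ih
        simpa using hab
  ext a b
  rcases le_or_gt b a with h | h
  · exact lower b a h
  · exact upper b a h

lemma Z_apply {F : Type*} [Field F] {n : ℕ} (u v x y : Matrix (Fin n) (Fin n) F) (a b : Fin n) :
    (u * y + x * v + x * y) a b = ∑ c, (u a c * y c b + x a c * v c b + x a c * y c b) := by
  simp [Matrix.mul_apply, Finset.sum_add_distrib]

lemma uv_last {F : Type*} [Field F] {m : ℕ} (x y : Matrix (Fin (m+1)) (Fin (m+1)) F)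
    (a : Fin m) : (P1op x * P1op y) a.castSucc (Fin.last m)
      = - (P1op x * y + x * P1op y + x * y) a.castSucc (Fin.last m) := by
  rw [Z_apply, Matrix.mul_apply, ← Finset.sum_neg_distrib]
  apply Finset.sum_congr rfl
  intro c _
  induction c using Fin.lastCases with
  | last => rw [P_last]; ring
  | cast c => rw [P_last]; ring

lemma uv_step {F : Type*} [Field F] {m : ℕ} (x y : Matrix (Fin (m+1)) (Fin (m+1)) F)
    (a b : Fin m) : (P1op x * P1op y) a.succ b.succ = (P1op x * P1op y) a.castSucc b.castSucc
      + (P1op x * y + x * P1op y + x * y) a.castSucc b.castSucc := by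
  rw [Z_apply, Matrix.mul_apply, Matrix.mul_apply, ← Finset.sum_add_distrib,
    Fin.sum_univ_succ, Fin.sum_univ_castSucc, P_zero, P_last]
  simp only [P_step]
  rw [zero_mul, zero_add]
  have : ∀ s t r : F, s = t → r = 0 → s = t + r := by rintro s t r rfl rfl; simp
  apply this
  · apply Finset.sum_congr rfl
    intro c _
    ring
  · ring

lemma Z_trace {F : Type*} [Field F] {m : ℕ} (x y : Matrix (Fin (m+1)) (Fin (m+1)) F) :
    (P1op x * y + x * P1op y + x * y).trace = x.trace * y.trace := by
  have h1 := Fin.sum_univ_succ (fun i => (P1op x * P1op y) i i)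
  rw [Fin.sum_univ_castSucc] at h1
  simp only [uv_step, Finset.sum_add_distrib] at h1
  have h0 : (P1op x * P1op y) 0 0 = 0 := by simp [Matrix.mul_apply, P_zero]
  have h2 : (P1op x * P1op y) (Fin.last m) (Fin.last m)
      + (P1op x * y + x * P1op y + x * y) (Fin.last m) (Fin.last m) = x.trace * y.trace := by
    rw [← P_trace, ← P_trace, Z_apply, Matrix.mul_apply, ← Finset.sum_add_distrib,
      Fin.sum_univ_castSucc]
    simp only [P_last]
    rw [Finset.sum_eq_zero]
    · ring
    · intro c _; ring
  rw [Matrix.trace, Fin.sum_univ_castSucc]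
  simp only [Matrix.diag_apply]
  rw [h0] at h1
  linear_combination h2 - h1

/-- `P1op` is a Rota–Baxter operator of weight `1` on `Mₙ(F)` which is
`1`-skew-symmetric with respect to the trace form: `P₁ + P₁* + id = tr(·)·E`. -/
theorem P1op_is_one_skew_rb {F : Type*} [Field F] {n : ℕ} :
    (∀ x y : Matrix (Fin n) (Fin n) F,
        P1op x * P1op y = P1op (P1op x * y + x * P1op y + x * y)) ∧
    (∃ Ps : Matrix (Fin n) (Fin n) F → Matrix (Fin n) (Fin n) F,
        (∀ x y : Matrix (Fin n) (Fin n) F, (P1op x * y).trace = (x * Ps y).trace) ∧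
        (∀ x : Matrix (Fin n) (Fin n) F,
            P1op x + Ps x + x = x.trace • (1 : Matrix (Fin n) (Fin n) F))) := by
  cases n with
  | zero =>
    exact ⟨fun _ _ => Subsingleton.elim _ _, fun x => x, fun x y => by simp [Matrix.trace],
      fun _ => Subsingleton.elim _ _⟩
  | succ m =>
    refine ⟨fun x y => ?_, fun x => x.trace • (1 : Matrix _ _ F) - x - P1op x, fun x y => ?_,
      fun x => by ext i j; simp only [Matrix.add_apply, Matrix.sub_apply]; ring⟩
    · rw [← sub_eq_zero]
      apply d_zero
      · intro a
        rw [Matrix.sub_apply, P_zero, Matrix.mul_apply]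
        simp [P_zero]
      · intro a
        rw [Matrix.sub_apply, P_last, uv_last]
        ring
      · intro a b
        rw [Matrix.sub_apply, Matrix.sub_apply, P_step, uv_step]
        ring
    · have h := Z_trace x y
      simp only [Matrix.trace_add] at h
      simp only [Matrix.mul_sub, Matrix.trace_sub, Matrix.mul_smul, Matrix.mul_one,
        Matrix.trace_smul, smul_eq_mul]
      linear_combination h
end

section
/- Let (V,⟦·,·⟧) be a finite-dimensional λ-double Lie algebra with λ ≠ 0, i.e., ⟦a,b⟧ + τ(⟦b,a⟧) = λ(a⊗b - b⊗a) and ⟦a,⟦b,c⟧⟧_L - τ₁₂(⟦b,⟦a,c⟧⟧_R) - ⟦⟦a,b⟧,c⟧_L = -λτ₁₂(b⊗⟦a,c⟧) for all a,b,c ∈ V. Extend the bracket to the free associative algebra A = F⟨e₁,…,eₙ⟩ via the Leibniz rules ⟦a,bc⟧ = (b⊗1)⟦a,c⟧ + ⟦a,b⟧(1⊗c) and ⟦ab,c⟧ = (1⊗a)⟦b,c⟧ + ⟦a,c⟧(b⊗1). Then {a,b} := μ(⟦a,b⟧) satisfies the left Leibniz/Jacobi identity {a,{b,c}} - {b,{a,c}}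 = {{a,b},c} for all a,b,c ∈ A. -/
open scoped TensorProduct

section Defs

variable (F A : Type*) [Field F] [Ring A] [Algebra F A]

/-- The permutation `τ₁₂` of the first two factors of `A ⊗ A ⊗ A`. -/
noncomputable def swap12 : A ⊗[F] (A ⊗[F] A) →ₗ[F] A ⊗[F] (A ⊗[F] A) :=
  (TensorProduct.assoc F A A A).toLinearMap ∘ₗ
    LinearMap.rTensor A (TensorProduct.comm F A A).toLinearMap ∘ₗ
      (TensorProduct.assoc F A A A).symm.toLinearMap

/-- The permutation `τ₂₃` of the last two factors of `A ⊗ A ⊗ A`. -/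
noncomputable def swap23 : A ⊗[F] (A ⊗[F] A) →ₗ[F] A ⊗[F] (A ⊗[F] A) :=
  LinearMap.lTensor A (TensorProduct.comm F A A).toLinearMap

variable {F A}

/-- `⟦a, -⟧_L : x ⊗ y ↦ ⟦a,x⟧ ⊗ y`. -/
noncomputable def extL (D : A →ₗ[F] A →ₗ[F] (A ⊗[F] A)) (a : A) :
    A ⊗[F] A →ₗ[F] A ⊗[F] (A ⊗[F] A) :=
  (TensorProduct.assoc F A A A).toLinearMap ∘ₗ LinearMap.rTensor A (D a)

/-- `⟦a, -⟧_R : x ⊗ y ↦ τ₁₂(x ⊗ ⟦a,y⟧)`. -/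
noncomputable def extR (D : A →ₗ[F] A →ₗ[F] (A ⊗[F] A)) (a : A) :
    A ⊗[F] A →ₗ[F] A ⊗[F] (A ⊗[F] A) :=
  swap12 F A ∘ₗ LinearMap.lTensor A (D a)

/-- `⟦-, c⟧_L : x ⊗ y ↦ τ₂₃(⟦x,c⟧ ⊗ y)`. -/
noncomputable def extLc (D : A →ₗ[F] A →ₗ[F] (A ⊗[F] A)) (c : A) :
    A ⊗[F] A →ₗ[F] A ⊗[F] (A ⊗[F] A) :=
  swap23 F A ∘ₗ (TensorProduct.assoc F A A A).toLinearMap ∘ₗ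
    LinearMap.rTensor A (D.flip c)

end Defs

section Helpers

variable {F A : Type*} [Field F] [Ring A] [Algebra F A]

theorem swap12_tmul (x y z : A) : swap12 F A (x ⊗ₜ (y ⊗ₜ z)) = y ⊗ₜ (x ⊗ₜ z) := by
  simp [swap12]

theorem swap12_swap12 (t : A ⊗[F] (A ⊗[F] A)) : swap12 F A (swap12 F A t) = t := by
  induction t with
  | zero => simp
  | add x y hx hy => simp [hx, hy]
  | tmul x t =>
    induction t with
    | zero => simp
    | add x y hx hy => simp [TensorProduct.tmul_add, hx, hy]
    | tmul y z => simp [swap12_tmul]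

noncomputable def i12 : A ⊗[F] A →ₗ[F] A ⊗[F] (A ⊗[F] A) :=
  (TensorProduct.assoc F A A A).toLinearMap ∘ₗ (TensorProduct.mk F (A ⊗[F] A) A).flip 1

noncomputable def i23 : A ⊗[F] A →ₗ[F] A ⊗[F] (A ⊗[F] A) :=
  TensorProduct.mk F A (A ⊗[F] A) 1

noncomputable def i13 : A ⊗[F] A →ₗ[F] A ⊗[F] (A ⊗[F] A) :=
  LinearMap.lTensor A (TensorProduct.mk F A A 1)

noncomputable def m12 : A ⊗[F] (A ⊗[F] A) →ₗ[F] A ⊗[F] A :=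
  LinearMap.rTensor A (LinearMap.mul' F A) ∘ₗ (TensorProduct.assoc F A A A).symm.toLinearMap

noncomputable def m23 : A ⊗[F] (A ⊗[F] A) →ₗ[F] A ⊗[F] A :=
  LinearMap.lTensor A (LinearMap.mul' F A)

noncomputable def cm : A ⊗[F] A →ₗ[F] A ⊗[F] A := (TensorProduct.comm F A A).toLinearMap

@[simp] theorem i12_tmul (x y : A) : i12 (x ⊗ₜ[F] y) = x ⊗ₜ (y ⊗ₜ 1) := by simp [i12]
@[simp] theorem i23_tmul (x y : A) : i23 (x ⊗ₜ[F] y) = 1 ⊗ₜ (x ⊗ₜ y) := by simp [i23]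
@[simp] theorem i13_tmul (x y : A) : i13 (x ⊗ₜ[F] y) = x ⊗ₜ (1 ⊗ₜ y) := by simp [i13]
@[simp] theorem m12_tmul (x y z : A) : m12 (x ⊗ₜ[F] (y ⊗ₜ[F] z)) = (x * y) ⊗ₜ z := by simp [m12]
@[simp] theorem m23_tmul (x y z : A) : m23 (x ⊗ₜ[F] (y ⊗ₜ[F] z)) = x ⊗ₜ (y * z) := by simp [m23]
@[simp] theorem cm_tmul (x y : A) : cm (x ⊗ₜ[F] y) = y ⊗ₜ x := by simp [cm]

/-- induction on all three-tensors -/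
theorem ind3 {P : A ⊗[F] (A ⊗[F] A) → Prop} (h0 : P 0)
    (ha : ∀ s t, P s → P t → P (s + t)) (h : ∀ x y z, P (x ⊗ₜ (y ⊗ₜ z))) (t) : P t := by
  induction t with
  | zero => exact h0
  | add x y hx hy => exact ha _ _ hx hy
  | tmul x t =>
    induction t with
    | zero => simpa using h0
    | add x y hx hy => rw [TensorProduct.tmul_add]; exact ha _ _ hx hy
    | tmul y z => exact h _ _ _

noncomputable def lc (D : A →ₗ[F] A →ₗ[F] (A ⊗[F] A)) (c : A) :
    A ⊗[F] A →ₗ[F] A ⊗[F] (A ⊗[F] A) := LinearMap.lTensor A (D c)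

variable (D : A →ₗ[F] A →ₗ[F] (A ⊗[F] A))

/-- `x ⊗ y ↦ s ↦ x₁ ⊗ x₂ ⊗ y` -/
noncomputable def as3 (y : A) : A ⊗[F] A →ₗ[F] A ⊗[F] (A ⊗[F] A) :=
  (TensorProduct.assoc F A A A).toLinearMap ∘ₗ (TensorProduct.mk F (A ⊗[F] A) A).flip y
@[simp] theorem as3_tmul (x y z : A) : as3 z (x ⊗ₜ[F] y) = x ⊗ₜ (y ⊗ₜ z) := by simp [as3]

noncomputable def bs3 (y : A) : A ⊗[F] A →ₗ[F] A ⊗[F] (A ⊗[F] A) :=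
  swap23 F A ∘ₗ as3 y
@[simp] theorem bs3_tmul (x y z : A) : bs3 z (x ⊗ₜ[F] y) = x ⊗ₜ (z ⊗ₜ y) := by
  simp [bs3, swap23]

theorem extL_tmul (a x y : A) : extL D a (x ⊗ₜ y) = as3 y (D a x) := by simp [extL, as3]
theorem extLc_tmul (c x y : A) : extLc D c (x ⊗ₜ y) = bs3 y (D x c) := by
  simp [extLc, bs3, as3]
theorem lc_tmul (a x y : A) : lc D a (x ⊗ₜ y) = x ⊗ₜ (D a y) := by simp [lc]

theorem as3_l (b y : A) (t : A ⊗[F] A) : as3 y ((1 ⊗ₜ b) * t) = (1 ⊗ₜ (b ⊗ₜ 1)) * as3 y t := by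
  induction t with
  | zero => simp
  | add x y hx hy => simp only [mul_add, map_add, hx, hy]
  | tmul p q => simp
theorem as3_r (b y : A) (t : A ⊗[F] A) : as3 y (t * (b ⊗ₜ 1)) = as3 y t * (b ⊗ₜ (1 ⊗ₜ 1)) := by
  induction t with
  | zero => simp
  | add x y hx hy => simp only [add_mul, map_add, hx, hy]
  | tmul p q => simp
theorem as3_r2 (b y : A) (t : A ⊗[F] A) : as3 y (t * (1 ⊗ₜ b)) = as3 y t * (1 ⊗ₜ (b ⊗ₜ 1)) := by
  induction t with
  | zero => simp
  | add x y hx hy => simp only [add_mul, map_add, hx, hy]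
  | tmul p q => simp
theorem as3_m (b y : A) (t : A ⊗[F] A) : as3 (b * y) t = (1 ⊗ₜ (1 ⊗ₜ b)) * as3 y t := by
  induction t with
  | zero => simp
  | add x y hx hy => simp only [mul_add, map_add, hx, hy]
  | tmul p q => simp
theorem as3_x (x y : A) (t : A ⊗[F] A) :
    as3 y ((x ⊗ₜ 1) * t) = (x ⊗ₜ (1 ⊗ₜ y)) * i12 t := by
  induction t with
  | zero => simp
  | add x y hx hy => simp only [mul_add, map_add, hx, hy]
  | tmul p q => simp
theorem bs3_l (b y : A) (t : A ⊗[F] A) : bs3 y ((1 ⊗ₜ b) * t) = (1 ⊗ₜ (1 ⊗ₜ b)) * bs3 y t := by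
  induction t with
  | zero => simp
  | add x y hx hy => simp only [mul_add, map_add, hx, hy]
  | tmul p q => simp
theorem bs3_x (b y : A) (t : A ⊗[F] A) :
    bs3 y ((1 ⊗ₜ b) * t) = (1 ⊗ₜ (y ⊗ₜ b)) * i13 t := by
  induction t with
  | zero => simp
  | add x y hx hy => simp only [mul_add, map_add, hx, hy]
  | tmul p q => simp
theorem bs3_x2 (b y : A) (t : A ⊗[F] A) :
    bs3 y (t * (b ⊗ₜ 1)) = i13 t * (b ⊗ₜ (y ⊗ₜ 1)) := by
  induction t with
  | zero => simp
  | add x y hx hy => simp only [add_mul, map_add, hx, hy]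
  | tmul p q => simp
theorem bs3_r (b y : A) (t : A ⊗[F] A) : bs3 y (t * (b ⊗ₜ 1)) = bs3 y t * (b ⊗ₜ (1 ⊗ₜ 1)) := by
  induction t with
  | zero => simp
  | add x y hx hy => simp only [add_mul, map_add, hx, hy]
  | tmul p q => simp
theorem bs3_m (b y : A) (t : A ⊗[F] A) : bs3 (b * y) t = (1 ⊗ₜ (b ⊗ₜ 1)) * bs3 y t := by
  induction t with
  | zero => simp
  | add x y hx hy => simp only [mul_add, map_add, hx, hy]
  | tmul p q => simp
theorem bs3_m2 (b y : A) (t : A ⊗[F] A) : bs3 (y * b) t = bs3 y t * (1 ⊗ₜ (b ⊗ₜ 1)) := by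
  induction t with
  | zero => simp
  | add x y hx hy => simp only [add_mul, map_add, hx, hy]
  | tmul p q => simp

def LeibL : Prop := ∀ a b c : A, D (a * b) c = (1 ⊗ₜ[F] a) * D b c + D a c * (b ⊗ₜ[F] 1)
def LeibR : Prop := ∀ a b c : A, D a (b * c) = (b ⊗ₜ[F] 1) * D a c + D a b * (1 ⊗ₜ[F] c)

variable {D}

theorem e1 (hL : LeibL D) (b b' : A) (t : A ⊗[F] A) :
    extL D (b * b') t = (1 ⊗ₜ (b ⊗ₜ 1)) * extL D b' t + extL D b t * (b' ⊗ₜ (1 ⊗ₜ 1)) := by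
  induction t with
  | zero => simp
  | add x y hx hy => simp only [add_mul, mul_add, map_add, hx, hy]; abel
  | tmul p q => rw [extL_tmul, extL_tmul, extL_tmul, hL, map_add, as3_l, as3_r]

theorem e2 (hR : LeibR D) (a b : A) (t : A ⊗[F] A) :
    lc D a ((1 ⊗ₜ b) * t) = (1 ⊗ₜ (b ⊗ₜ 1)) * lc D a t + i23 (D a b) * i13 t := by
  induction t with
  | zero => simp
  | add x y hx hy => simp only [mul_add, map_add, hx, hy]; abel
  | tmul p q =>
    rw [Algebra.TensorProduct.tmul_mul_tmul, lc_tmul, lc_tmul, hR, TensorProduct.tmul_add]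
    simp [i23]

theorem e3 (a b : A) (t : A ⊗[F] A) :
    lc D a (t * (b ⊗ₜ 1)) = lc D a t * (b ⊗ₜ (1 ⊗ₜ 1)) := by
  induction t with
  | zero => simp
  | add x y hx hy => simp only [add_mul, map_add, hx, hy]
  | tmul p q =>
    rw [Algebra.TensorProduct.tmul_mul_tmul, lc_tmul, lc_tmul, ← Algebra.TensorProduct.one_def]
    simp

theorem e4 (c b : A) (t : A ⊗[F] A) :
    extLc D c ((1 ⊗ₜ b) * t) = (1 ⊗ₜ (b ⊗ₜ 1)) * extLc D c t := by
  induction t with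
  | zero => simp
  | add x y hx hy => simp only [mul_add, map_add, hx, hy]
  | tmul p q =>
    rw [Algebra.TensorProduct.tmul_mul_tmul, extLc_tmul, extLc_tmul, bs3_m, one_mul]

theorem e5 (hL : LeibL D) (c b : A) (t : A ⊗[F] A) :
    extLc D c (t * (b ⊗ₜ 1)) = extLc D c t * (b ⊗ₜ (1 ⊗ₜ 1)) + i23 (cm t) * i13 (D b c) := by
  induction t with
  | zero => simp
  | add x y hx hy => simp only [add_mul, map_add, hx, hy]; abel
  | tmul p q =>
    rw [Algebra.TensorProduct.tmul_mul_tmul, extLc_tmul, extLc_tmul, mul_one, hL, map_add,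
      bs3_x, bs3_r, cm_tmul, i23_tmul, add_comm]

theorem e6 (a b : A) (t : A ⊗[F] A) :
    extL D a ((1 ⊗ₜ b) * t) = (1 ⊗ₜ (1 ⊗ₜ b)) * extL D a t := by
  induction t with
  | zero => simp
  | add x y hx hy => simp only [mul_add, map_add, hx, hy]
  | tmul p q =>
    rw [Algebra.TensorProduct.tmul_mul_tmul, extL_tmul, extL_tmul, as3_m, one_mul]

theorem e7 (hR : LeibR D) (a b : A) (t : A ⊗[F] A) :
    extL D a (t * (b ⊗ₜ 1)) = extL D a t * (1 ⊗ₜ (b ⊗ₜ 1)) + i13 t * i12 (D a b) := by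
  induction t with
  | zero => simp
  | add x y hx hy => simp only [add_mul, map_add, hx, hy]; abel
  | tmul p q =>
    rw [Algebra.TensorProduct.tmul_mul_tmul, extL_tmul, extL_tmul, mul_one, hR, map_add,
      as3_x, as3_r2, i13_tmul, add_comm]

theorem e8 (hL : LeibL D) (b b' : A) (t : A ⊗[F] A) :
    lc D (b * b') t = (1 ⊗ₜ (1 ⊗ₜ b)) * lc D b' t + lc D b t * (1 ⊗ₜ (b' ⊗ₜ 1)) := by
  induction t with
  | zero => simp
  | add x y hx hy => simp only [add_mul, mul_add, map_add, hx, hy]; abel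
  | tmul p q =>
    rw [lc_tmul, lc_tmul, lc_tmul, hL, TensorProduct.tmul_add]
    simp

theorem e9 (hL : LeibL D) (c b : A) (t : A ⊗[F] A) :
    extLc D c ((b ⊗ₜ 1) * t) = (1 ⊗ₜ (1 ⊗ₜ b)) * extLc D c t + i13 (D b c) * i12 t := by
  induction t with
  | zero => simp
  | add x y hx hy => simp only [mul_add, map_add, hx, hy]; abel
  | tmul p q =>
    rw [Algebra.TensorProduct.tmul_mul_tmul, extLc_tmul, extLc_tmul, one_mul, hL, map_add,
      bs3_l, bs3_x2, i12_tmul]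

theorem e10 (c b : A) (t : A ⊗[F] A) :
    extLc D c (t * (1 ⊗ₜ b)) = extLc D c t * (1 ⊗ₜ (b ⊗ₜ 1)) := by
  induction t with
  | zero => simp
  | add x y hx hy => simp only [add_mul, map_add, hx, hy]
  | tmul p q =>
    rw [Algebra.TensorProduct.tmul_mul_tmul, extLc_tmul, extLc_tmul, bs3_m2, mul_one]

theorem i13_mul (s t : A ⊗[F] A) : i13 (s * t) = i13 s * i13 t := by
  induction s with
  | zero => simp
  | add x y hx hy => simp only [add_mul, map_add, hx, hy]
  | tmul x y =>
    induction t with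
    | zero => simp
    | add x y hx hy => simp only [mul_add, map_add, hx, hy]
    | tmul z w => simp

theorem i23_mul (s t : A ⊗[F] A) : i23 (s * t) = i23 s * i23 t := by
  simp [i23]

theorem cm_mul (s t : A ⊗[F] A) : cm (s * t) = cm s * cm t := by
  induction s with
  | zero => simp
  | add x y hx hy => simp only [add_mul, map_add, hx, hy]
  | tmul x y =>
    induction t with
    | zero => simp
    | add x y hx hy => simp only [mul_add, map_add, hx, hy]
    | tmul z w => simp

theorem i13_comm (b : A) (t : A ⊗[F] A) :
    i13 t * (1 ⊗ₜ (b ⊗ₜ 1)) = (1 ⊗ₜ (b ⊗ₜ 1)) * i13 t := by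
  induction t with
  | zero => simp
  | add x y hx hy => simp only [mul_add, add_mul, map_add, hx, hy]
  | tmul x y => simp

variable (D) in
noncomputable def DJ (a b c : A) : A ⊗[F] (A ⊗[F] A) :=
  extL D a (D b c) - lc D b (D a c) - extLc D c (D a b)

theorem DJ_mul1 (hL : LeibL D) (hR : LeibR D) (b b' a c : A) :
    DJ D (b * b') a c = (1 ⊗ₜ (b ⊗ₜ 1)) * DJ D b' a c + DJ D b a c * (b' ⊗ₜ (1 ⊗ₜ 1))
      - i23 (D a b + cm (D b a)) * i13 (D b' c) := by
  simp only [DJ, hL b b', map_add, e1 hL, e2 hR, e3, e4, e5 hL, mul_sub, sub_mul, add_mul]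
  abel

theorem DJ_mul2 (hL : LeibL D) (hR : LeibR D) (b b' a c : A) :
    DJ D a (b * b') c = (1 ⊗ₜ (1 ⊗ₜ b)) * DJ D a b' c + DJ D a b c * (1 ⊗ₜ (b' ⊗ₜ 1)) := by
  simp only [DJ, hL b b', hR a b b', map_add, e6, e7 hR, e8 hL, e9 hL, e10, mul_sub, sub_mul]
  abel

theorem S_mul (hL : LeibL D) (hR : LeibR D) (b b' a : A) :
    D a (b * b') + cm (D (b * b') a) = (b ⊗ₜ 1) * (D a b' + cm (D b' a))
      + (D a b + cm (D b a)) * (1 ⊗ₜ b') := by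
  simp only [hL b b', hR a b b', map_add, cm_mul, cm_tmul, mul_add, add_mul]
  abel

theorem smul_aux {M : Type*} [AddCommGroup M] [Module F M] (l : F) (x y : M) :
    (-l) • x - l • y = (-l) • (x + y) := by module

theorem smul_aux2 {M : Type*} [AddCommGroup M] [Module F M] (l : F) (x y z : M) :
    (-l) • x - (-l) • y - l • z = l • (y - x - z) := by module

theorem LeibL.e (hL : LeibL D) (a b c : A) :
    D (a * b) c = (1 ⊗ₜ[F] a) * D b c + D a c * (b ⊗ₜ[F] 1) := hL a b c

variable (D) in
structure Good (lam : F) (c : A) (G : Set A) (b : A) (T : A ⊗[F] A)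
    (R : A ⊗[F] (A ⊗[F] A)) : Prop where
  S : ∀ a ∈ G, D a b + cm (D b a) =
    lam • (T * (a ⊗ₜ 1) - (1 ⊗ₜ a) * T - (b * a) ⊗ₜ 1 + 1 ⊗ₜ (a * b))
  J1 : ∀ a ∈ G, DJ D b a c = (-lam) • (R * (1 ⊗ₜ (a ⊗ₜ 1)) - (1 ⊗ₜ (1 ⊗ₜ a)) * R
    + (1 ⊗ₜ (1 ⊗ₜ a)) * i13 (D b c))
  J2 : ∀ a ∈ G, DJ D a b c =
    (-lam) • (i23 (cm T) * i13 (D a c) - (1 ⊗ₜ (1 ⊗ₜ b)) * i13 (D a c))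

theorem Good.add {lam : F} {c : A} {G : Set A} {b b' : A} {T T' R R'}
    (h : Good D lam c G b T R) (h' : Good D lam c G b' T' R') :
    Good D lam c G (b + b') (T + T') (R + R') := by
  constructor
  · intro a ha
    have e1 := h.S a ha
    have e2 := h'.S a ha
    have : D a (b + b') + cm (D (b + b') a) = (D a b + cm (D b a)) + (D a b' + cm (D b' a)) := by
      simp only [map_add, LinearMap.add_apply]; abel
    rw [this, e1, e2, ← smul_add]
    congr 1
    simp only [add_mul, mul_add, TensorProduct.add_tmul, TensorProduct.tmul_add]
    abel
  · intro a ha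
    have e1 := h.J1 a ha
    have e2 := h'.J1 a ha
    have : DJ D (b + b') a c = DJ D b a c + DJ D b' a c := by
      simp only [DJ, extL, lc, map_add, LinearMap.add_apply, LinearMap.rTensor_add,
        LinearMap.comp_add]; abel
    rw [this, e1, e2, ← smul_add]
    congr 1
    simp only [add_mul, mul_add, map_add, LinearMap.add_apply]
    abel
  · intro a ha
    have e1 := h.J2 a ha
    have e2 := h'.J2 a ha
    have : DJ D a (b + b') c = DJ D a b c + DJ D a b' c := by
      simp only [DJ, extL, lc, map_add, LinearMap.add_apply, LinearMap.lTensor_add]; abel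
    rw [this, e1, e2, ← smul_add]
    congr 1
    simp only [add_mul, map_add, TensorProduct.tmul_add]
    abel

theorem D_one_left (hL : LeibL D) (c : A) : D 1 c = 0 := by
  have := hL 1 1 c
  rw [← Algebra.TensorProduct.one_def] at this
  simpa using this

theorem D_one_right (hR : LeibR D) (a : A) : D a 1 = 0 := by
  have := hR a 1 1
  rw [← Algebra.TensorProduct.one_def] at this
  simpa using this

theorem Good.scalar (hL : LeibL D) (hR : LeibR D) (lam : F) (c : A) (G : Set A) (r : F) :
    Good D lam c G (algebraMap F A r) (r • 1) 0 := by
  have h1 : ∀ x, D (algebraMap F A r) x = 0 := by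
    intro x; rw [Algebra.algebraMap_eq_smul_one]; simp [D_one_left hL]
  have h2 : ∀ x, D x (algebraMap F A r) = 0 := by
    intro x; rw [Algebra.algebraMap_eq_smul_one]; simp [D_one_right hR]
  have h3 : D (algebraMap F A r) = 0 := by ext x; simp [h1]
  constructor
  · intro a ha
    rw [h1, h2]
    simp [Algebra.algebraMap_eq_smul_one, TensorProduct.smul_tmul']
  · intro a ha
    rw [DJ, h1, h1, extL, h3]
    simp
  · intro a ha
    rw [DJ, h1, h2, lc, h3]
    simp [Algebra.algebraMap_eq_smul_one, Algebra.TensorProduct.one_def]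

theorem Good.gen {lam : F} {c : A} {G : Set A} {b : A} (hb : b ∈ G)
    (hS : ∀ a ∈ G, D a b + cm (D b a) = lam • (a ⊗ₜ b - b ⊗ₜ a))
    (hJ : ∀ a ∈ G, ∀ b ∈ G, DJ D a b c = (-lam) • (i13 (D a c) * (1 ⊗ₜ (b ⊗ₜ 1)))) :
    Good D lam c G b (b ⊗ₜ 1 + 1 ⊗ₜ b) (i13 (D b c)) := by
  constructor
  · intro a ha
    rw [hS a ha]
    congr 1
    simp [add_mul, mul_add]
    abel
  · intro a ha
    rw [hJ b hb a ha]
    congr 1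
    abel
  · intro a ha
    rw [hJ a ha b hb, i13_comm]
    congr 1
    simp [add_mul]

theorem Good.mul (hL : LeibL D) (hR : LeibR D) {lam : F} {c : A} {G : Set A} {b b' : A} {T T' R R'}
    (h : Good D lam c G b T R) (h' : Good D lam c G b' T' R') :
    Good D lam c G (b * b') ((b ⊗ₜ 1) * T' + T * (1 ⊗ₜ b') - b ⊗ₜ b')
      ((1 ⊗ₜ (b ⊗ₜ 1)) * R' + R * (b' ⊗ₜ (1 ⊗ₜ 1)) + i23 T * i13 (D b' c)
        - (1 ⊗ₜ (b ⊗ₜ 1)) * i13 (D b' c)) := by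
  constructor
  · intro a ha
    rw [S_mul hL hR, h.S a ha, h'.S a ha, mul_smul_comm, smul_mul_assoc, ← smul_add]
    congr 1
    have c1 : (1 ⊗ₜ[F] a) * ((b ⊗ₜ[F] 1) * T') = (b ⊗ₜ 1) * ((1 ⊗ₜ a) * T') := by
      simp [← mul_assoc]
    have c2 : (T * (1 ⊗ₜ[F] b')) * (a ⊗ₜ[F] 1) = T * (a ⊗ₜ 1) * (1 ⊗ₜ b') := by
      simp [mul_assoc]
    simp only [mul_add, add_mul, mul_sub, sub_mul, c1, c2]
    simp [mul_assoc]
    abel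
  · intro a ha
    rw [DJ_mul1 hL hR, h.S a ha, h'.J1 a ha, h.J1 a ha, mul_smul_comm,
      smul_mul_assoc, map_smul, smul_mul_assoc, ← smul_add, smul_aux]
    congr 1
    have k1 : i13 (D (b * b') c) = (1 ⊗ₜ (1 ⊗ₜ b)) * i13 (D b' c)
        + i13 (D b c) * (b' ⊗ₜ (1 ⊗ₜ 1)) := by
      rw [hL, map_add, i13_mul, i13_mul, i13_tmul, i13_tmul]
    have c1 : (1 ⊗ₜ[F] (1 ⊗ₜ[F] a)) * ((1 ⊗ₜ[F] (b ⊗ₜ[F] 1)) * R')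
        = (1 ⊗ₜ (b ⊗ₜ 1)) * ((1 ⊗ₜ (1 ⊗ₜ a)) * R') := by
      simp [← mul_assoc]
    have c2 : (R * (b' ⊗ₜ[F] (1 ⊗ₜ[F] 1))) * (1 ⊗ₜ[F] (a ⊗ₜ[F] 1))
        = R * (1 ⊗ₜ (a ⊗ₜ 1)) * (b' ⊗ₜ (1 ⊗ₜ 1)) := by
      simp [mul_assoc]
    have c3 : (i23 T * i13 (D b' c)) * (1 ⊗ₜ[F] (a ⊗ₜ[F] 1))
        = i23 T * (1 ⊗ₜ (a ⊗ₜ 1)) * i13 (D b' c) := by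
      rw [mul_assoc, i13_comm, mul_assoc]
    have c4 : ((1 ⊗ₜ (b ⊗ₜ 1)) * i13 (D b' c)) * (1 ⊗ₜ[F] (a ⊗ₜ[F] 1))
        = (1 ⊗ₜ ((b * a) ⊗ₜ 1)) * i13 (D b' c) := by
      rw [mul_assoc, i13_comm, ← mul_assoc]; simp
    have c5 : (1 ⊗ₜ[F] (1 ⊗ₜ[F] a)) * ((1 ⊗ₜ (b ⊗ₜ 1)) * i13 (D b' c))
        = (1 ⊗ₜ (b ⊗ₜ 1)) * ((1 ⊗ₜ (1 ⊗ₜ a)) * i13 (D b' c)) := by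
      simp [← mul_assoc]
    have c6 : (1 ⊗ₜ[F] (1 ⊗ₜ[F] a)) * ((1 ⊗ₜ (1 ⊗ₜ b)) * i13 (D b' c))
        = (1 ⊗ₜ (1 ⊗ₜ (a * b))) * i13 (D b' c) := by
      simp [← mul_assoc]
    simp only [k1, mul_add, add_mul, mul_sub, sub_mul, map_add, map_sub, i23_mul, i23_tmul,
      c1, c2, c3, c4, c5, c6]
    simp only [mul_assoc]
    abel
  · intro a ha
    rw [DJ_mul2 hL hR, h'.J2 a ha, h.J2 a ha, mul_smul_comm,
      smul_mul_assoc, ← smul_add]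
    congr 1
    have c1 : i23 (cm T) * i13 (D a c) * (1 ⊗ₜ[F] (b' ⊗ₜ[F] 1))
       = i23 (cm T) * (1 ⊗ₜ[F] (b' ⊗ₜ[F] 1)) * i13 (D a c) := by
      rw [mul_assoc, i13_comm, mul_assoc]
    have c2 : (1 ⊗ₜ[F] (1 ⊗ₜ[F] b)) * i13 (D a c) * (1 ⊗ₜ[F] (b' ⊗ₜ[F] 1))
       = (1 ⊗ₜ[F] (b' ⊗ₜ[F] b)) * i13 (D a c) := by
      rw [mul_assoc, i13_comm, ← mul_assoc]; simp
    have c3 : (1 ⊗ₜ[F] (1 ⊗ₜ[F] b)) * ((1 ⊗ₜ[F] (1 ⊗ₜ[F] b')) * i13 (D a c))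
       = (1 ⊗ₜ[F] (1 ⊗ₜ[F] (b * b'))) * i13 (D a c) := by
      rw [← mul_assoc]; simp
    simp only [mul_add, add_mul, mul_sub, sub_mul, map_add, map_sub, i23_mul, i23_tmul, cm_mul,
      cm_tmul, c1, c2, c3]
    simp only [mul_assoc]
    abel

variable (D) in
noncomputable def W (c : A) : A ⊗[F] A →ₗ[F] A ⊗[F] A :=
  m23 ∘ₗ extLc D c ∘ₗ cm

theorem W_tmul (c s t : A) : W D c (s ⊗ₜ t) = (1 ⊗ₜ s) * D t c := by
  simp only [W, LinearMap.comp_apply, cm_tmul, extLc_tmul]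
  induction D t c with
  | zero => simp
  | add x y hx hy => simp only [mul_add, map_add, hx, hy]
  | tmul x y => simp

variable (D) in
noncomputable def Ld (b : A) : A →ₗ[F] A := LinearMap.mul' F A ∘ₗ D b

variable (D) in
noncomputable def Md (b : A) : A ⊗[F] A →ₗ[F] A ⊗[F] A :=
  LinearMap.rTensor A (Ld D b) + LinearMap.lTensor A (Ld D b)

variable (D) in
noncomputable def H (b a c : A) : A ⊗[F] A :=
  Md D b (D a c) - D (Ld D b a) c - D a (Ld D b c)

theorem mul'_l (x : A) (t : A ⊗[F] A) :
    LinearMap.mul' F A ((x ⊗ₜ 1) * t) = x * LinearMap.mul' F A t := by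
  induction t with
  | zero => simp
  | add x y hx hy => simp only [mul_add, map_add, hx, hy]
  | tmul x y => simp [mul_assoc]

theorem mul'_r (x : A) (t : A ⊗[F] A) :
    LinearMap.mul' F A (t * (1 ⊗ₜ x)) = LinearMap.mul' F A t * x := by
  induction t with
  | zero => simp
  | add x y hx hy => simp only [add_mul, map_add, hx, hy]
  | tmul x y => simp [mul_assoc]

theorem mul'_m (x : A) (t : A ⊗[F] A) :
    LinearMap.mul' F A ((1 ⊗ₜ x) * t) = LinearMap.mul' F A (t * (x ⊗ₜ 1)) := by
  induction t with
  | zero => simp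
  | add x y hx hy => simp only [add_mul, mul_add, map_add, hx, hy]
  | tmul x y => simp [mul_assoc]

theorem Ld_mul (hR : LeibR D) (b x y : A) : Ld D b (x * y) = x * Ld D b y + Ld D b x * y := by
  simp only [Ld, LinearMap.comp_apply, hR b x y, map_add, mul'_l, mul'_r]

theorem Ld_one (hR : LeibR D) (b : A) : Ld D b 1 = 0 := by
  simp [Ld, D_one_right hR]

theorem Md_tmul (b x y : A) : Md D b (x ⊗ₜ y) = Ld D b x ⊗ₜ y + x ⊗ₜ Ld D b y := by
  simp [Md]

theorem Md_mul (hR : LeibR D) (b : A) (s t : A ⊗[F] A) :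
    Md D b (s * t) = s * Md D b t + Md D b s * t := by
  induction s with
  | zero => simp
  | add x y hx hy => simp only [add_mul, map_add, hx, hy]; abel
  | tmul x y =>
    induction t with
    | zero => simp
    | add x y hx hy => simp only [mul_add, map_add, hx, hy]; abel
    | tmul z w =>
      simp only [Algebra.TensorProduct.tmul_mul_tmul, Md_tmul, Ld_mul hR, mul_add, add_mul,
        TensorProduct.tmul_add, TensorProduct.add_tmul]
      abel

theorem H_mul (hL : LeibL D) (hR : LeibR D) (b a a' c : A) :
    H D b (a * a') c = (1 ⊗ₜ a) * H D b a' c + H D b a c * (a' ⊗ₜ 1) := by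
  simp only [H, hL a a', map_add, LinearMap.add_apply, Md_mul hR, Ld_mul hR, Md_tmul, Ld_one hR,
    TensorProduct.zero_tmul, TensorProduct.tmul_zero, zero_add, add_zero,
    hL.e, mul_add, add_mul, mul_sub, sub_mul]
  abel

theorem f1 (b : A) (t : A ⊗[F] A) : m12 (extL D b t) + m23 (lc D b t) = Md D b t := by
  induction t with
  | zero => simp
  | add x y hx hy => rw [map_add (Md D b), ← hx, ← hy]; simp only [map_add]; abel
  | tmul x y =>
    rw [extL_tmul, lc_tmul, Md_tmul]
    congr 1
    rw [Ld, LinearMap.comp_apply]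
    induction D b x with
    | zero => simp
    | add x y hx hy => simp only [map_add, hx, hy, TensorProduct.add_tmul]
    | tmul x y => simp

theorem f2 (hR : LeibR D) (a : A) (t : A ⊗[F] A) :
    m12 (lc D a t) + m23 (extL D a t) = D a (LinearMap.mul' F A t) := by
  induction t with
  | zero => simp
  | add x y hx hy => rw [map_add (LinearMap.mul' F A), map_add (D a), ← hx, ← hy]; simp only [map_add]; abel
  | tmul x y =>
    rw [extL_tmul, lc_tmul, LinearMap.mul'_apply, hR]
    congr 1
    · induction D a y with
      | zero => simp
      | add x y hx hy => simp only [map_add, hx, hy, mul_add, TensorProduct.tmul_add]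
      | tmul x y => simp
    · induction D a x with
      | zero => simp
      | add x y hx hy => simp only [map_add, hx, hy, add_mul]
      | tmul x y => simp

theorem f3 (hL : LeibL D) (c : A) (t : A ⊗[F] A) :
    m12 (extLc D c t) + W D c t = D (LinearMap.mul' F A t) c := by
  induction t with
  | zero => simp
  | add x y hx hy =>
    rw [map_add (LinearMap.mul' F A), map_add D, LinearMap.add_apply, ← hx, ← hy]
    simp only [map_add]; abel
  | tmul x y =>
    rw [extLc_tmul, W_tmul, LinearMap.mul'_apply, hL, add_comm]
    congr 1
    · induction D x c with
      | zero => simp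
      | add x y hx hy => simp only [map_add, hx, hy, add_mul]
      | tmul x y => simp

theorem cm_cm (t : A ⊗[F] A) : cm (cm t) = t := by simp [cm]

theorem H_eq (hL : LeibL D) (hR : LeibR D) (b a c : A) :
    H D b a c = m12 (DJ D b a c) - m23 (DJ D a b c) - W D c (cm (D a b + cm (D b a))) := by
  have e : m23 (extLc D c (D a b)) = W D c (cm (D a b)) := by
    simp [W, cm_cm]
  simp only [H, DJ, map_sub, map_add, cm_cm, e, ← f1]
  rw [Ld, LinearMap.comp_apply, LinearMap.comp_apply, ← f2 hR, ← f3 hL]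
  abel

theorem m12_r (a : A) (R : A ⊗[F] (A ⊗[F] A)) :
    m12 (R * (1 ⊗ₜ (a ⊗ₜ 1))) = m12 R * (a ⊗ₜ 1) := by
  induction R using ind3 with
  | h0 => simp
  | ha s t hs ht => simp only [add_mul, map_add, hs, ht]
  | h x y z => simp [mul_assoc]
theorem m12_l (a : A) (R : A ⊗[F] (A ⊗[F] A)) :
    m12 ((1 ⊗ₜ (1 ⊗ₜ a)) * R) = (1 ⊗ₜ a) * m12 R := by
  induction R using ind3 with
  | h0 => simp
  | ha s t hs ht => simp only [mul_add, map_add, hs, ht]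
  | h x y z => simp
theorem m12_i13 (t : A ⊗[F] A) : m12 (i13 t) = t := by
  induction t with
  | zero => simp
  | add x y hx hy => simp only [map_add, hx, hy]
  | tmul x y => simp
theorem m23_l (b : A) (t : A ⊗[F] A) :
    m23 ((1 ⊗ₜ (1 ⊗ₜ b)) * i13 t) = (1 ⊗ₜ b) * t := by
  induction t with
  | zero => simp
  | add x y hx hy => simp only [map_add, mul_add, hx, hy]
  | tmul x y => simp
theorem m23_t (s t : A) (u : A ⊗[F] A) :
    m23 (1 ⊗ₜ (s ⊗ₜ t) * i13 u) = (1 ⊗ₜ (s * t)) * u := by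
  induction u with
  | zero => simp
  | add x y hx hy => simp only [map_add, mul_add, hx, hy]
  | tmul x y => simp [mul_assoc]

theorem W_r (hL : LeibL D) (c a : A) (T : A ⊗[F] A) :
    W D c (cm (T * (a ⊗ₜ 1))) = m23 (i23 (cm T) * i13 (D a c)) + W D c (cm T) * (a ⊗ₜ 1) := by
  induction T with
  | zero => simp
  | add x y hx hy => simp only [map_add, add_mul, hx, hy]; abel
  | tmul x y =>
    simp only [Algebra.TensorProduct.tmul_mul_tmul, cm_tmul, W_tmul, i23_tmul, m23_t, hL.e, mul_add,
      ← mul_assoc, mul_one, one_mul]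
theorem W_l (c a : A) (T : A ⊗[F] A) :
    W D c (cm ((1 ⊗ₜ a) * T)) = (1 ⊗ₜ a) * W D c (cm T) := by
  induction T with
  | zero => simp
  | add x y hx hy => simp only [map_add, mul_add, hx, hy]
  | tmul x y =>
    simp only [Algebra.TensorProduct.tmul_mul_tmul, cm_tmul, W_tmul, ← mul_assoc, one_mul]

theorem Good.H (hL : LeibL D) (hR : LeibR D) {lam : F} {c : A} {G : Set A} {b : A} {T R}
    (h : Good D lam c G b T R) : ∃ E : A ⊗[F] A, ∀ a ∈ G,
      H D b a c = (1 ⊗ₜ a) * E - E * (a ⊗ₜ 1) := by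
  refine ⟨lam • (m12 R + W D c (cm T) - D b c), fun a ha => ?_⟩
  rw [H_eq hL hR, h.J1 a ha, h.J2 a ha, h.S a ha]
  simp only [map_smul, mul_smul_comm, smul_mul_assoc, ← smul_sub lam]
  rw [smul_aux2]
  congr 1
  simp only [map_add, map_sub, m12_r, m12_l, m12_i13, m23_l, W_r hL, W_l, cm_tmul, W_tmul,
    D_one_left hL, hL b a, mul_zero, mul_add, mul_sub, add_mul, sub_mul,
    ← Algebra.TensorProduct.one_def, one_mul]
  abel

theorem mul'_Md (hR : LeibR D) (b : A) (t : A ⊗[F] A) :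
    LinearMap.mul' F A (Md D b t) = Ld D b (LinearMap.mul' F A t) := by
  induction t with
  | zero => simp
  | add x y hx hy => simp only [map_add, hx, hy]
  | tmul x y =>
    rw [Md_tmul, map_add, LinearMap.mul'_apply, LinearMap.mul'_apply, LinearMap.mul'_apply,
      Ld_mul hR, add_comm]

theorem swap12_i13 (b : A) (t : A ⊗[F] A) :
    swap12 F A (b ⊗ₜ t) = i13 t * (1 ⊗ₜ (b ⊗ₜ 1)) := by
  induction t with
  | zero => simp
  | add x y hx hy => simp only [map_add, TensorProduct.tmul_add, add_mul, hx, hy]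
  | tmul x y => simp [swap12_tmul]

end Helpers

/-- Let `(V,⟦·,·⟧)` be a finite-dimensional `λ`-double Lie algebra, `λ ≠ 0`,
with basis `e₁,…,eₙ`, and let `D` be its extension to the free associative
algebra `A = F⟨e₁,…,eₙ⟩` via the Leibniz rules. Then `{a,b} := μ(⟦a,b⟧)`
satisfies `{a,{b,c}} - {b,{a,c}} = {{a,b},c}` for all `a,b,c ∈ A`. -/
theorem extended_bracket_leibniz_jacobi
    {F : Type*} [Field F] {n : ℕ} (lam : F) (hlam : lam ≠ 0)
    (D : FreeAlgebra F (Fin n) →ₗ[F] FreeAlgebra F (Fin n) →ₗ[F]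
      (FreeAlgebra F (Fin n) ⊗[F] FreeAlgebra F (Fin n)))
    (hVV : ∀ i j : Fin n, D (FreeAlgebra.ι F i) (FreeAlgebra.ι F j) ∈
      Submodule.span F {x : FreeAlgebra F (Fin n) ⊗[F] FreeAlgebra F (Fin n) |
        ∃ k l : Fin n, x = (FreeAlgebra.ι F k) ⊗ₜ[F] (FreeAlgebra.ι F l)})
    (hac : ∀ i j : Fin n,
      D (FreeAlgebra.ι F i) (FreeAlgebra.ι F j) +
        (TensorProduct.comm F _ _) (D (FreeAlgebra.ι F j) (FreeAlgebra.ι F i)) =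
      lam • ((FreeAlgebra.ι F i) ⊗ₜ[F] (FreeAlgebra.ι F j)
        - (FreeAlgebra.ι F j) ⊗ₜ[F] (FreeAlgebra.ι F i)))
    (hJac : ∀ i j k : Fin n,
      extL D (FreeAlgebra.ι F i) (D (FreeAlgebra.ι F j) (FreeAlgebra.ι F k))
        - swap12 F (FreeAlgebra F (Fin n))
            (extR D (FreeAlgebra.ι F j) (D (FreeAlgebra.ι F i) (FreeAlgebra.ι F k)))
        - extLc D (FreeAlgebra.ι F k) (D (FreeAlgebra.ι F i) (FreeAlgebra.ι F j))
      = -lam • swap12 F (FreeAlgebra F (Fin n))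
          ((FreeAlgebra.ι F j) ⊗ₜ[F] (D (FreeAlgebra.ι F i) (FreeAlgebra.ι F k))))
    (hLeibR : ∀ a b c : FreeAlgebra F (Fin n),
      D a (b * c) = (b ⊗ₜ[F] (1 : FreeAlgebra F (Fin n))) * D a c
        + D a b * ((1 : FreeAlgebra F (Fin n)) ⊗ₜ[F] c))
    (hLeibL : ∀ a b c : FreeAlgebra F (Fin n),
      D (a * b) c = ((1 : FreeAlgebra F (Fin n)) ⊗ₜ[F] a) * D b c
        + D a c * (b ⊗ₜ[F] (1 : FreeAlgebra F (Fin n)))) :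
    ∀ a b c : FreeAlgebra F (Fin n),
      LinearMap.mul' F (FreeAlgebra F (Fin n))
          (D a (LinearMap.mul' F (FreeAlgebra F (Fin n)) (D b c)))
        - LinearMap.mul' F (FreeAlgebra F (Fin n))
            (D b (LinearMap.mul' F (FreeAlgebra F (Fin n)) (D a c)))
        = LinearMap.mul' F (FreeAlgebra F (Fin n))
            (D (LinearMap.mul' F (FreeAlgebra F (Fin n)) (D a b)) c) := by
  have hL : LeibL D := hLeibL
  have hR : LeibR D := hLeibR
  set μ := LinearMap.mul' F (FreeAlgebra F (Fin n)) with hμ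
  intro a b c
  change Ld D a (Ld D b c) - Ld D b (Ld D a c) = Ld D (Ld D a b) c
  induction c using FreeAlgebra.induction generalizing a b with
  | grade0 r =>
    simp [Ld, Algebra.algebraMap_eq_smul_one, D_one_right hR]
  | add x y hx hy =>
    simp only [map_add, ← hx, ← hy]; abel
  | mul x y hx hy =>
    simp only [Ld_mul hR, map_add, ← hx, ← hy, mul_sub, sub_mul]; abel
  | grade1 k =>
    set c := FreeAlgebra.ι F k with hc
    have good : ∃ T R, Good D lam c (Set.range (FreeAlgebra.ι F)) a T R := by
      induction a using FreeAlgebra.induction with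
      | grade0 r => exact ⟨_, _, Good.scalar hL hR lam c _ r⟩
      | add x y hx hy =>
        obtain ⟨T, R, h⟩ := hx
        obtain ⟨T', R', h'⟩ := hy
        exact ⟨_, _, h.add h'⟩
      | mul x y hx hy =>
        obtain ⟨T, R, h⟩ := hx
        obtain ⟨T', R', h'⟩ := hy
        exact ⟨_, _, h.mul hL hR h'⟩
      | grade1 j =>
        refine ⟨_, _, Good.gen ⟨j, rfl⟩ ?_ ?_⟩
        · rintro _ ⟨i, rfl⟩
          exact hac i j
        · rintro _ ⟨i, rfl⟩ _ ⟨j, rfl⟩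
          have h := hJac i j k
          rw [extR, LinearMap.comp_apply, swap12_swap12] at h
          rw [DJ, lc, h, swap12_i13]
    obtain ⟨T, R, hg⟩ := good
    obtain ⟨E, hE⟩ := hg.H hL hR
    have key : H D a b c = (1 ⊗ₜ b) * E - E * (b ⊗ₜ 1) := by
      induction b using FreeAlgebra.induction with
      | grade0 r =>
        have h0 : H D a 1 c = 0 := by
          simp [H, D_one_left hL, Ld_one hR]
        rw [Algebra.algebraMap_eq_smul_one]
        have h1 : H D a (r • 1) c = r • H D a 1 c := by
          simp [H, smul_sub]
        rw [h1, h0, TensorProduct.tmul_smul, ← TensorProduct.smul_tmul',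
          ← Algebra.TensorProduct.one_def]
        simp
      | grade1 i => exact hE _ ⟨i, rfl⟩
      | add x y hx hy =>
        have h1 : H D a (x + y) c = H D a x c + H D a y c := by
          simp only [H, map_add, LinearMap.add_apply]; abel
        rw [h1, hx, hy, TensorProduct.add_tmul, TensorProduct.tmul_add, add_mul, mul_add]
        abel
      | mul x y hx hy =>
        rw [H_mul hL hR, hx, hy, mul_sub, sub_mul, ← mul_assoc, ← mul_assoc, mul_assoc E]
        simp only [Algebra.TensorProduct.tmul_mul_tmul, one_mul, mul_assoc]
        abel
    have := congrArg (LinearMap.mul' F (FreeAlgebra F (Fin n))) key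
    rw [map_sub, mul'_m, sub_self, H, map_sub, map_sub, mul'_Md hR] at this
    change Ld D a (Ld D b c) - Ld D (Ld D a b) c - Ld D b (Ld D a c) = 0 at this
    rw [← sub_eq_zero, ← this]
    abel
end
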